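/- arXiv:1010.4609 — 3 statements merged into one kernel-verified Lean document; each statement's English description precedes it below -/
import Mathlib

section
/- Subproblem interchangeability and partial interchangeability are not comparable: there exists a binary CSP with a variable v, values a, b ∈ D(v), and a set S of variables with v ∈ S such that a and b are partially interchangeable with respect to S but not subproblem interchangeable with respect to S; and there exists a binary CSP with a variable v, values a, b ∈ D(v), and a set S of variables with v ∈ S such that a and b are subproblem interchangeable with respect to S but not partially interchangeable with respect to S. -/
/-- A binary CSP: variables `V`, a domain `dom v ⊆ α` for each variable, a symmetric
irreflexive relation `hasCstr` telling which pairs of distinct variables are related by a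
constraint, and for related variables the symmetric compatibility relation `compat`. -/
structure BinaryCSP (V α : Type) where
  dom : V → Set α
  hasCstr : V → V → Prop
  compat : V → α → V → α → Prop
  hasCstr_symm : ∀ {v w}, hasCstr v w → hasCstr w v
  hasCstr_irrefl : ∀ v, ¬ hasCstr v v
  compat_symm : ∀ {v w} {a c}, compat v a w c → compat w c v a

namespace BinaryCSP

variable {V α : Type}

/-- A solution: an assignment in the domains satisfying all constraints. -/
def Solution (P : BinaryCSP V α) (s : V → α) : Prop :=
  (∀ v, s v ∈ P.dom v) ∧ ∀ v w, P.hasCstr v w → P.compat v (s v) w (s w)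

/-- The support set of value `a` for variable `v` at a variable `w`:
the domain values of `w` compatible with `v = a`. -/
def Support (P : BinaryCSP V α) (v : V) (a : α) (w : V) : Set α :=
  {c | c ∈ P.dom w ∧ P.compat v a w c}

/-- A solution of the subproblem induced by the set `S` of variables. -/
def SubSolution (P : BinaryCSP V α) (S : Set V) (s : V → α) : Prop :=
  (∀ v ∈ S, s v ∈ P.dom v) ∧
    ∀ v ∈ S, ∀ w ∈ S, P.hasCstr v w → P.compat v (s v) w (s w)

/-- Neighborhood interchangeability (NI) of values `a`, `b` for variable `v`. -/
def NI (P : BinaryCSP V α) (v : V) (a b : α) : Prop :=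
  ∀ w, P.hasCstr v w → P.Support v a w = P.Support v b w

/-- Full interchangeability (FI) of values `a`, `b` for variable `v`. -/
def FI [DecidableEq V] (P : BinaryCSP V α) (v : V) (a b : α) : Prop :=
  (∀ s, P.Solution s → s v = a → P.Solution (Function.update s v b)) ∧
  (∀ s, P.Solution s → s v = b → P.Solution (Function.update s v a))

/-- Full interchangeability of `a`, `b` for `v` in the subproblem induced by `S`. -/
def SubFI [DecidableEq V] (P : BinaryCSP V α) (S : Set V) (v : V) (a b : α) : Prop :=
  (∀ s, P.SubSolution S s → s v = a → P.SubSolution S (Function.update s v b)) ∧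
  (∀ s, P.SubSolution S s → s v = b → P.SubSolution S (Function.update s v a))

/-- Subproblem interchangeability (SPrI) with respect to `S` (where `v ∈ S`):
full interchangeability in the subproblem induced by `S`. -/
def SPrI [DecidableEq V] (P : BinaryCSP V α) (S : Set V) (v : V) (a b : α) : Prop :=
  P.SubFI S v a b

/-- k-interchangeability (KI): `a`, `b` are fully interchangeable in every
subproblem induced by `v` together with `k - 1` other variables. -/
def KI [DecidableEq V] (P : BinaryCSP V α) (k : ℕ) (v : V) (a b : α) : Prop :=
  ∀ T : Finset V, v ∉ T → T.card = k - 1 → P.SubFI (insert v (T : Set V)) v a b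

/-- Partial interchangeability (PI) with respect to `S` (where `v ∈ S`). -/
def PI (P : BinaryCSP V α) (S : Set V) (v : V) (a b : α) : Prop :=
  (∀ s, P.Solution s → s v = a →
    ∃ s', P.Solution s' ∧ s' v = b ∧ ∀ w ∉ S, s' w = s w) ∧
  (∀ s, P.Solution s → s v = b →
    ∃ s', P.Solution s' ∧ s' v = a ∧ ∀ w ∉ S, s' w = s w)

/-- Substitutability (Sub): `a` is substitutable for `b` at variable `v`. -/
def Sub [DecidableEq V] (P : BinaryCSP V α) (v : V) (a b : α) : Prop :=
  ∀ s, P.Solution s → s v = b → P.Solution (Function.update s v a)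

/-- Neighborhood substitutability (NSub): `a` is NSub for `b` at variable `v`. -/
def NSub (P : BinaryCSP V α) (v : V) (a b : α) : Prop :=
  ∀ w, P.hasCstr v w → P.Support v b w ⊆ P.Support v a w

/-- Neighborhood partial interchangeability (NPI) given boundary `S` (where `v ∈ S`). -/
def NPI (P : BinaryCSP V α) (S : Set V) (v : V) (a b : α) : Prop :=
  ∀ w, w ∉ S → P.hasCstr v w → P.Support v a w = P.Support v b w

/-- Directional interchangeability (DirI) with respect to a strict order `r` on variables. -/
def DirI (P : BinaryCSP V α) (r : V → V → Prop) (v : V) (a b : α) : Prop :=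
  ∀ w, r w v → P.hasCstr v w → P.Support v a w = P.Support v b w

/-- Dynamic neighborhood interchangeability (DynNI) of `a`, `b` for `v` with respect to
the partial assignment `A` on the set `W` of variables (where `v ∉ W`). -/
def DynNI (P : BinaryCSP V α) (W : Set V) (A : V → α) (v : V) (a b : α) : Prop :=
  (∀ w, w ∉ W → P.hasCstr v w → P.Support v a w = P.Support v b w) ∧
  (∀ w ∈ W, P.hasCstr v w → (P.compat v a w (A w) ↔ P.compat v b w (A w)))

/-- Full dynamic interchangeability (FDynI) with respect to the partial assignment
`A` on `W` (where `v ∉ W`). -/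
def FDynI [DecidableEq V] (P : BinaryCSP V α) (W : Set V) (A : V → α) (v : V) (a b : α) :
    Prop :=
  (∀ s, P.Solution s → (∀ w ∈ W, s w = A w) → s v = a →
    P.Solution (Function.update s v b)) ∧
  (∀ s, P.Solution s → (∀ w ∈ W, s w = A w) → s v = b →
    P.Solution (Function.update s v a))

/-- Full dynamic substitutability (FDynSub): `a` is fully dynamically substitutable for
`b` with respect to the partial assignment `A` on `W` (where `v ∉ W`). -/
def FDynSub [DecidableEq V] (P : BinaryCSP V α) (W : Set V) (A : V → α) (v : V) (a b : α) :
    Prop :=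
  ∀ s, P.Solution s → (∀ w ∈ W, s w = A w) → s v = b → P.Solution (Function.update s v a)

/-- Neighborhood tuple interchangeability (NTI) of `a`, `b` for `v` with respect to the
set `S` of variables (where `v ∉ S`). -/
def NTI (P : BinaryCSP V α) (S : Set V) (v : V) (a b : α) : Prop :=
  (∀ t, P.SubSolution (insert v S) t → t v = a →
    ∃ t', P.SubSolution (insert v S) t' ∧ t' v = b ∧
      ∀ u ∈ insert v S, ∀ w, w ∉ insert v S → P.hasCstr u w →
        P.Support u (t u) w = P.Support u (t' u) w) ∧
  (∀ t, P.SubSolution (insert v S) t → t v = b →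
    ∃ t', P.SubSolution (insert v S) t' ∧ t' v = a ∧
      ∀ u ∈ insert v S, ∀ w, w ∉ insert v S → P.hasCstr u w →
        P.Support u (t u) w = P.Support u (t' u) w)

/-- Forward neighborhood interchangeability (ForwNI) of two assignments on `U`. -/
def ForwNI (P : BinaryCSP V α) (U : Set V) (u u' : V → α) : Prop :=
  ∀ x ∈ U, ∀ w, w ∉ U → P.hasCstr x w → P.Support x (u x) w = P.Support x (u' x) w

/-- Context dependent interchangeability (CtxDepI): some assignment to the other
variables extends to a solution both with `v = a` and with `v = b`. -/
def CtxDepI [DecidableEq V] (P : BinaryCSP V α) (v : V) (a b : α) : Prop :=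
  ∃ t : V → α, P.Solution (Function.update t v a) ∧ P.Solution (Function.update t v b)

/-- Generalized neighborhood substitutability (GNSub): `a` and `b` share at least one
support with respect to each neighboring variable. -/
def GNSub (P : BinaryCSP V α) (v : V) (a b : α) : Prop :=
  ∀ w, P.hasCstr v w → ∃ c ∈ P.dom w, P.compat v a w c ∧ P.compat v b w c

end BinaryCSP

/-! Full interchangeability is SPrI at the largest set `S = univ` and PI at the smallest set
`S = {v}`. At the opposite ends the two notions are weak: PI with respect to `univ` only compares
whether `a` and `b` occur in solutions at all, and SPrI with respect to `{v}` holds for any two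
values of the domain. Hence any CSP in which `a` and `b` both occur in solutions without being
fully interchangeable separates PI from SPrI in both directions. -/

namespace BinaryCSP

variable {V α : Type} {P : BinaryCSP V α} {v w : V} {a b : α} {s : V → α}

theorem subSolution_univ : P.SubSolution Set.univ s ↔ P.Solution s := by
  simp only [SubSolution, Solution, Set.mem_univ, true_implies]

theorem subSolution_singleton : P.SubSolution {v} s ↔ s v ∈ P.dom v := by
  simp only [SubSolution, Set.mem_singleton_iff, forall_eq, P.hasCstr_irrefl, false_implies,
    and_true]

theorem sprI_univ [DecidableEq V] : P.SPrI Set.univ v a b ↔ P.FI v a b := by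
  simp only [SPrI, SubFI, FI, subSolution_univ]

theorem sprI_singleton [DecidableEq V] (ha : a ∈ P.dom v) (hb : b ∈ P.dom v) :
    P.SPrI {v} v a b := by
  simp only [SPrI, SubFI, subSolution_singleton, Function.update_self]
  exact ⟨fun _ _ _ => hb, fun _ _ _ => ha⟩

theorem pi_univ :
    P.PI Set.univ v a b ↔
      ((∃ s, P.Solution s ∧ s v = a) ↔ ∃ s, P.Solution s ∧ s v = b) := by
  simp only [PI, Set.mem_univ, not_true_eq_false, false_implies, implies_true, and_true,
    iff_def, forall_exists_index, and_imp]

theorem pi_singleton [DecidableEq V] : P.PI {v} v a b ↔ P.FI v a b := by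
  have exists_solution_iff_update (s : V → α) (c : α) :
      (∃ s', P.Solution s' ∧ s' v = c ∧ ∀ w ∉ ({v} : Set V), s' w = s w) ↔
        P.Solution (Function.update s v c) := by
    simp only [Set.mem_singleton_iff, ← ne_eq, ← Function.eq_update_iff, exists_eq_right]
  simp only [PI, FI, exists_solution_iff_update]

/-- The CSP requiring all variables to take the same value: every value of `α` is allowed
everywhere, and any two distinct variables are related by the equality constraint. It serves as
the example separating PI from SPrI. -/
def allEqual (V α : Type) : BinaryCSP V α where
  dom _ := Set.univ
  hasCstr v w := v ≠ w
  compat _ a _ c := a = c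
  hasCstr_symm := Ne.symm
  hasCstr_irrefl _ h := h rfl
  compat_symm := Eq.symm

theorem solution_const_allEqual (a : α) : (allEqual V α).Solution fun _ => a :=
  ⟨fun _ => Set.mem_univ a, fun _ _ _ => rfl⟩

theorem not_fi_allEqual [DecidableEq V] (hvw : v ≠ w) (hab : a ≠ b) :
    ¬ (allEqual V α).FI v a b := by
  intro h
  have hupdate : (allEqual V α).Solution (Function.update (fun _ => a) v b) :=
    h.1 _ (solution_const_allEqual a) rfl
  have hba : Function.update (fun _ => a) v b v = Function.update (fun _ => a) v b w :=
    hupdate.2 v w hvw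
  rw [Function.update_self, Function.update_of_ne hvw.symm] at hba
  exact hab hba.symm

theorem pi_univ_allEqual : (allEqual V α).PI Set.univ v a b :=
  pi_univ.2 <| iff_of_true ⟨_, solution_const_allEqual a, rfl⟩ ⟨_, solution_const_allEqual b, rfl⟩

end BinaryCSP

/-- SPrI and PI are not comparable. -/
theorem stmt_2 :
    (∃ (V α : Type) (_ : Fintype V) (_ : DecidableEq V) (_ : Fintype α)
        (P : BinaryCSP V α) (v : V) (a b : α) (S : Set V),
        a ∈ P.dom v ∧ b ∈ P.dom v ∧ v ∈ S ∧
        P.PI S v a b ∧ ¬ P.SPrI S v a b) ∧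
    (∃ (V α : Type) (_ : Fintype V) (_ : DecidableEq V) (_ : Fintype α)
        (P : BinaryCSP V α) (v : V) (a b : α) (S : Set V),
        a ∈ P.dom v ∧ b ∈ P.dom v ∧ v ∈ S ∧
        P.SPrI S v a b ∧ ¬ P.PI S v a b) := by
  have not_fi : ¬ (BinaryCSP.allEqual Bool Bool).FI true true false :=
    BinaryCSP.not_fi_allEqual (w := false) Bool.false_ne_true.symm Bool.false_ne_true.symm
  refine ⟨⟨Bool, Bool, inferInstance, inferInstance, inferInstance,
      BinaryCSP.allEqual Bool Bool, true, true, false, Set.univ,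
      Set.mem_univ _, Set.mem_univ _, Set.mem_univ _, ?_, ?_⟩,
    ⟨Bool, Bool, inferInstance, inferInstance, inferInstance,
      BinaryCSP.allEqual Bool Bool, true, true, false, {true},
      Set.mem_univ _, Set.mem_univ _, Set.mem_singleton _, ?_, ?_⟩⟩
  · exact BinaryCSP.pi_univ_allEqual
  · exact BinaryCSP.sprI_univ.not.2 not_fi
  · exact BinaryCSP.sprI_singleton (Set.mem_univ _) (Set.mem_univ _)
  · exact BinaryCSP.pi_singleton.not.2 not_fi
end

section
/- If values a, b ∈ D(v) of a binary CSP are neighborhood partially interchangeable given boundary S (with v ∈ S), then a and b are fully interchangeable in the subproblem induced by (V ∖ S) ∪ {v}; in particular, a and b are subproblem interchangeable with respect to the set (V ∖ S) ∪ {v}. -/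
namespace BinaryCSP

variable {V α : Type} {P : BinaryCSP V α} {v w : V} {a b : α} {S T : Set V} {s : V → α}

theorem ne_of_hasCstr (hvw : P.hasCstr v w) : v ≠ w := by
  rintro rfl
  exact P.hasCstr_irrefl v hvw

theorem NPI.symm (h : P.NPI S v a b) : P.NPI S v b a :=
  fun w hwS hvw => (h w hwS hvw).symm

theorem NPI.sdiff_singleton (h : P.NPI S v a b) : P.NPI (S \ {v}) v a b :=
  fun w hw hvw => h w (fun hwS => hw ⟨hwS, (ne_of_hasCstr hvw).symm⟩) hvw

variable [DecidableEq V]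

theorem SubSolution.update_of_compat (hs : P.SubSolution T s) (hb : b ∈ P.dom v)
    (hcompat : ∀ w ∈ T, P.hasCstr v w → P.compat v b w (s w)) :
    P.SubSolution T (Function.update s v b) := by
  obtain ⟨hdom, hcstr⟩ := hs
  have hcompat_update : ∀ w ∈ T, P.hasCstr v w → P.compat v b w (Function.update s v b w) := by
    intro w hw hvw
    simpa only [Function.update_of_ne (ne_of_hasCstr hvw).symm] using hcompat w hw hvw
  refine ⟨fun x hx => ?_, fun x hx y hy hxy => ?_⟩
  · rcases eq_or_ne x v with rfl | hxv
    · simpa only [Function.update_self] using hb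
    · simpa only [Function.update_of_ne hxv] using hdom x hx
  · rcases eq_or_ne x v with rfl | hxv
    · simpa only [Function.update_self] using hcompat_update y hy hxy
    · rcases eq_or_ne y v with rfl | hyv
      · simpa only [Function.update_self] using
          P.compat_symm (hcompat_update x hx (P.hasCstr_symm hxy))
      · simpa only [Function.update_of_ne hxv, Function.update_of_ne hyv] using
          hcstr x hx y hy hxy

theorem SubSolution.update_of_support_subset (hs : P.SubSolution T s) (hv : v ∈ T)
    (hb : b ∈ P.dom v)
    (hsupport : ∀ w ∈ T, P.hasCstr v w → P.Support v (s v) w ⊆ P.Support v b w) :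
    P.SubSolution T (Function.update s v b) := by
  refine hs.update_of_compat hb fun w hw hvw => ?_
  have hsw : s w ∈ P.Support v (s v) w := ⟨hs.1 w hw, hs.2 v hv w hw hvw⟩
  exact (hsupport w hw hvw hsw).2

theorem NPI.subSolution_update (h : P.NPI Tᶜ v a b) (hv : v ∈ T) (hb : b ∈ P.dom v)
    (hs : P.SubSolution T s) (hsv : s v = a) :
    P.SubSolution T (Function.update s v b) := by
  subst hsv
  exact hs.update_of_support_subset hv hb fun w hw hvw => (h w (not_not_intro hw) hvw).subset

theorem NPI.subFI_of_compl (h : P.NPI Tᶜ v a b) (hv : v ∈ T)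
    (ha : a ∈ P.dom v) (hb : b ∈ P.dom v) : P.SubFI T v a b :=
  ⟨fun _ => h.subSolution_update hv hb, fun _ => h.symm.subSolution_update hv ha⟩

end BinaryCSP

theorem stmt_7_general {V α : Type} [DecidableEq V] (P : BinaryCSP V α) (v : V) (a b : α)
    (ha : a ∈ P.dom v) (hb : b ∈ P.dom v) (S : Set V) (h : P.NPI S v a b) :
    P.SubFI (Sᶜ ∪ {v}) v a b ∧ P.SPrI (Sᶜ ∪ {v}) v a b := by
  have hcompl : (Sᶜ ∪ {v})ᶜ = S \ {v} := by
    rw [Set.compl_union, compl_compl, Set.sdiff_eq]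
  have hNPI : P.NPI (Sᶜ ∪ {v})ᶜ v a b := hcompl ▸ h.sdiff_singleton
  have hSubFI : P.SubFI (Sᶜ ∪ {v}) v a b := hNPI.subFI_of_compl (Or.inr rfl) ha hb
  exact ⟨hSubFI, hSubFI⟩

/-- NPI given boundary `S` implies full interchangeability in the
subproblem induced by `(V \ S) ∪ {v}`, i.e. SPrI with respect to that set. -/
theorem stmt_7 {V α : Type} [Fintype V] [DecidableEq V] [Fintype α]
    (P : BinaryCSP V α) (v : V) (a b : α)
    (ha : a ∈ P.dom v) (hb : b ∈ P.dom v)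
    (S : Set V) (hvS : v ∈ S)
    (h : P.NPI S v a b) :
    P.SubFI (Sᶜ ∪ {v}) v a b ∧ P.SPrI (Sᶜ ∪ {v}) v a b :=
  stmt_7_general P v a b ha hb S h
end

section
/- Let u and u' be assignments on a subset U ⊆ V of the variables of a binary CSP that are forward neighborhood interchangeable, and suppose u' satisfies every constraint relating two variables of U. Then u' is tuple substitutable for u: for every solution s with s(x) = u(x) for all x ∈ U, the assignment that equals u' on U and equals s on V ∖ U is a solution. -/
/-!
A constraint inside `U` holds under `s'` because `u'` satisfies it, and one outside `U` because `s`
does. A constraint from `x ∈ U` to `w ∉ U` says that the value of `w` lies in the support set of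
the value of `x`; replacing `u x` by `u' x` does not shrink this set, and the value of `w` is kept.
-/

namespace BinaryCSP

variable {V α : Type} {P : BinaryCSP V α} {U : Set V} {A B s t : V → α}

/-- Tuple substitutability (TupSub): `A` is tuple substitutable for `B` on `U`. The assignment
equal to `A` on `U` and to `s` elsewhere is described by its values, as a function `s'`, so that
membership in `U` need not be decidable. -/
def TupSub (P : BinaryCSP V α) (U : Set V) (A B : V → α) : Prop :=
  ∀ s, P.Solution s → Set.EqOn s B U →
    ∀ s', Set.EqOn s' A U → Set.EqOn s' s Uᶜ → P.Solution s'

/-- Forward neighborhood substitutability: `A` can stand in for `B` on `U` as far as the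
constraints leaving `U` are concerned. This is the one-sided form of `ForwNI`, just as `NSub` is
the one-sided form of `NI`. -/
def ForwNSub (P : BinaryCSP V α) (U : Set V) (A B : V → α) : Prop :=
  ∀ x ∈ U, ∀ w ∉ U, P.hasCstr x w → P.Support x (B x) w ⊆ P.Support x (A x) w

theorem ForwNI.forwNSub (h : P.ForwNI U B A) : P.ForwNSub U A B :=
  fun x hx w hw hxw => (h x hx w hw hxw).subset

theorem SubSolution.congr (hs : P.SubSolution U s) (hst : Set.EqOn s t U) :
    P.SubSolution U t := by
  refine ⟨fun v hv => ?_, fun v hv w hw hvw => ?_⟩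
  · exact hst hv ▸ hs.1 v hv
  · exact hst hv ▸ hst hw ▸ hs.2 v hv w hw hvw

theorem Solution.subSolution (hs : P.Solution s) (U : Set V) : P.SubSolution U s :=
  ⟨fun v _ => hs.1 v, fun v _ w _ => hs.2 v w⟩

theorem Solution.mem_support (hs : P.Solution s) {v w : V} (hvw : P.hasCstr v w) :
    s w ∈ P.Support v (s v) w :=
  ⟨hs.1 w, hs.2 v w hvw⟩

theorem solution_of_subSolution_of_subSolution_compl (hin : P.SubSolution U s)
    (hout : P.SubSolution Uᶜ s)
    (hcross : ∀ x ∈ U, ∀ w ∉ U, P.hasCstr x w → P.compat x (s x) w (s w)) :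
    P.Solution s := by
  refine ⟨fun v => ?_, fun v w hvw => ?_⟩
  · by_cases hv : v ∈ U
    · exact hin.1 v hv
    · exact hout.1 v hv
  · by_cases hv : v ∈ U <;> by_cases hw : w ∈ U
    · exact hin.2 v hv w hw hvw
    · exact hcross v hv w hw hvw
    · exact P.compat_symm (hcross w hw v hv (P.hasCstr_symm hvw))
    · exact hout.2 v hv w hw hvw

end BinaryCSP

theorem stmt_16_general {V α : Type} {P : BinaryCSP V α} {U : Set V} {A B : V → α}
    (hA : P.SubSolution U A) (hAB : P.ForwNSub U A B) : P.TupSub U A B := by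
  intro s hs hsB s' hs'A hs's
  refine BinaryCSP.solution_of_subSolution_of_subSolution_compl (hA.congr hs'A.symm)
    ((hs.subSolution Uᶜ).congr hs's.symm) fun x hx w hw hxw => ?_
  have hB : s w ∈ P.Support x (B x) w := hsB hx ▸ hs.mem_support hxw
  have hA' : s w ∈ P.Support x (A x) w := hAB x hx w hw hxw hB
  rw [hs'A hx, hs's hw]
  exact hA'.2

/-- if assignments `u`, `u'` on `U` are ForwNI and `u'` satisfies every
constraint inside `U`, then `u'` is tuple substitutable for `u`: any solution agreeing
with `u` on `U` remains a solution when replaced by `u'` on `U`. -/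
theorem stmt_16 {V α : Type} [Fintype V] [DecidableEq V] [Fintype α]
    (P : BinaryCSP V α) (U : Set V) (u u' : V → α)
    (hu : ∀ x ∈ U, u x ∈ P.dom x)
    (hu' : P.SubSolution U u')
    (hf : P.ForwNI U u u') :
    ∀ s, P.Solution s → (∀ x ∈ U, s x = u x) →
      ∀ s' : V → α, (∀ x ∈ U, s' x = u' x) → (∀ x ∉ U, s' x = s x) →
        P.Solution s' :=
  stmt_16_general hu' hf.forwNSub
end
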